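/- arXiv:1511.07902 — 2 statements merged into one kernel-verified Lean document; each statement's English description precedes it below -/
import Mathlib

section
/- Let μ > 0, τ² ≥ 0, α ∈ (0, 1), L ≥ 1, and let a(1), …, a(L) and b(0), b(1), …, b(L) be nonnegative real numbers satisfying 2μ a(i) ≤ α b(i−1) − b(i) + μ²τ² for every i = 1, …, L. Then the smallest increment satisfies 2μ · min_{1 ≤ i ≤ L} a(i) ≤ μ²τ² + b(0) · α^L (1 − α)/(1 − α^L). -/
/-- **Best-pocket sequence lemma.**
If nonnegative sequences `a`, `b` satisfy `2μ a(i) ≤ α b(i−1) − b(i) + μ²τ²` for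
`i = 1, …, L`, with `α ∈ (0,1)`, then
`2μ · min_{1 ≤ i ≤ L} a(i) ≤ μ²τ² + b(0) α^L (1−α)/(1−α^L)`. -/
theorem best_pocket_sequence_lemma
    (μ τ2 α : ℝ) (hμ : 0 < μ) (hτ2 : 0 ≤ τ2) (hα0 : 0 < α) (hα1 : α < 1)
    (L : ℕ) (hL : 1 ≤ L) (a b : ℕ → ℝ)
    (ha : ∀ i, 1 ≤ i → i ≤ L → 0 ≤ a i)
    (hb : ∀ i, i ≤ L → 0 ≤ b i)
    (hrec : ∀ i, 1 ≤ i → i ≤ L → 2 * μ * a i ≤ α * b (i - 1) - b i + μ ^ 2 * τ2) :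
    2 * μ * ((Finset.Icc 1 L).inf' (Finset.nonempty_Icc.mpr hL) a) ≤
      μ ^ 2 * τ2 + b 0 * (α ^ L * (1 - α) / (1 - α ^ L)) := by
  set m := (Finset.Icc 1 L).inf' (Finset.nonempty_Icc.mpr hL) a with hm
  have key : ∀ n, n ≤ L → b n * (1 - α) ≤
      α ^ n * b 0 * (1 - α) - (2 * μ * m - μ ^ 2 * τ2) * (1 - α ^ n) := by
    intro n
    induction n with
    | zero => intro _; simp
    | succ k ih =>
      intro hk
      have h1 := ih (by omega)
      have h2 := hrec (k + 1) (by omega) hk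
      have h3 : m ≤ a (k + 1) :=
        Finset.inf'_le _ (Finset.mem_Icc.mpr ⟨by omega, hk⟩)
      have h4 : 2 * μ * m ≤ 2 * μ * a (k + 1) :=
        mul_le_mul_of_nonneg_left h3 (by positivity)
      simp only [Nat.add_sub_cancel] at h2
      have h5 : b (k + 1) ≤ α * b k - (2 * μ * m - μ ^ 2 * τ2) := by linarith
      have h6 := mul_le_mul_of_nonneg_right h5 (sub_nonneg.mpr hα1.le)
      have h7 := mul_le_mul_of_nonneg_left h1 hα0.le
      rw [pow_succ]
      linarith
  have hk := key L le_rfl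
  have hbL := mul_nonneg (hb L le_rfl) (sub_nonneg.mpr hα1.le)
  have hpos : 0 < 1 - α ^ L :=
    sub_pos.mpr (pow_lt_one₀ hα0.le hα1 (by omega))
  have h8 : 2 * μ * m - μ ^ 2 * τ2 ≤ (b 0 * (α ^ L * (1 - α))) / (1 - α ^ L) := by
    rw [le_div_iff₀ hpos]
    linarith
  rw [← mul_div_assoc]
  linarith
end

section
/- Let μ > 0, τ² ≥ 0, α ∈ (0, 1), L ≥ 1, and let a(1), …, a(L) and b(0), b(1), …, b(L) be nonnegative real numbers satisfying 2μ a(i) ≤ α b(i−1) − b(i) + μ²τ² for every i = 1, …, L. Then for any κ with α ≤ κ < 1 it holds that Σ_{i=1}^{L} κ^{L−i} (2μ a(i) − μ²τ²) ≤ κ^L b(0); equivalently, the κ-exponentially-weighted average satisfies 2μ Σ_{i=1}^{L} r(i) a(i) ≤ κ^L (1 − κ)/(1 − κ^L) · b(0) + μ²τ², where r(i) = κ^{L−i} / Σ_{j=1}^{L} κ^{L−j}. -/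
theorem smoothing_sum_succ (κ : ℝ) (c : ℕ → ℝ) (n : ℕ) :
    ∑ i ∈ Finset.Icc 1 (n + 1), κ ^ (n + 1 - i) * c i =
      κ * (∑ i ∈ Finset.Icc 1 n, κ ^ (n - i) * c i) + c (n + 1) := by
  rw [Finset.sum_Icc_succ_top (by omega), Finset.mul_sum]
  congr 1
  · refine Finset.sum_congr rfl fun i hi => ?_
    have h := (Finset.mem_Icc.mp hi).2
    rw [show n + 1 - i = (n - i) + 1 by omega, pow_succ]
    ring
  · simp

theorem smoothing_geom (κ : ℝ) (n : ℕ) :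
    (∑ i ∈ Finset.Icc 1 n, κ ^ (n - i)) * (1 - κ) = 1 - κ ^ n := by
  induction n with
  | zero => simp
  | succ n ih =>
    have h := smoothing_sum_succ κ (fun _ => 1) n
    simp only [mul_one] at h
    rw [h, pow_succ]
    linear_combination κ * ih

/-- **Relaxed exponential-smoothing sequence lemma.**
If nonnegative sequences `a`, `b` satisfy `2μ a(i) ≤ α b(i−1) − b(i) + μ²τ²` for
`i = 1, …, L`, with `α ∈ (0,1)`, then for any `κ` with `α ≤ κ < 1`:
`Σ_{i=1}^{L} κ^{L−i}(2μ a(i) − μ²τ²) ≤ κ^L b(0)`, and the `κ`-exponentially weighted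
average satisfies `2μ Σ r(i) a(i) ≤ κ^L (1−κ)/(1−κ^L) b(0) + μ²τ²` where
`r(i) = κ^{L−i}/Σ_{j=1}^{L} κ^{L−j}`. -/
theorem relaxed_exponential_smoothing_sequence_lemma
    (μ τ2 α : ℝ) (hμ : 0 < μ) (hτ2 : 0 ≤ τ2) (hα0 : 0 < α) (hα1 : α < 1)
    (L : ℕ) (hL : 1 ≤ L) (a b : ℕ → ℝ)
    (ha : ∀ i, 1 ≤ i → i ≤ L → 0 ≤ a i)
    (hb : ∀ i, i ≤ L → 0 ≤ b i)
    (hrec : ∀ i, 1 ≤ i → i ≤ L → 2 * μ * a i ≤ α * b (i - 1) - b i + μ ^ 2 * τ2)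
    (κ : ℝ) (hκ0 : α ≤ κ) (hκ1 : κ < 1) :
    (∑ i ∈ Finset.Icc 1 L, κ ^ (L - i) * (2 * μ * a i - μ ^ 2 * τ2) ≤ κ ^ L * b 0) ∧
    (2 * μ * ∑ i ∈ Finset.Icc 1 L,
        (κ ^ (L - i) / ∑ j ∈ Finset.Icc 1 L, κ ^ (L - j)) * a i ≤
      κ ^ L * (1 - κ) / (1 - κ ^ L) * b 0 + μ ^ 2 * τ2) := by
  have hκ : 0 < κ := lt_of_lt_of_le hα0 hκ0
  have key : ∀ n, n ≤ L →
      ∑ i ∈ Finset.Icc 1 n, κ ^ (n - i) * (2 * μ * a i - μ ^ 2 * τ2) ≤ κ ^ n * b 0 - b n := by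
    intro n
    induction n with
    | zero => simp
    | succ n ih =>
      intro hn
      rw [smoothing_sum_succ κ (fun i => 2 * μ * a i - μ ^ 2 * τ2) n, pow_succ κ n]
      have h1 := mul_le_mul_of_nonneg_left (ih (by omega)) hκ.le
      have h2 := hrec (n + 1) (by omega) hn
      rw [Nat.add_sub_cancel] at h2
      have h3 := mul_le_mul_of_nonneg_right hκ0 (hb n (by omega))
      linarith
  have h1 : ∑ i ∈ Finset.Icc 1 L, κ ^ (L - i) * (2 * μ * a i - μ ^ 2 * τ2) ≤ κ ^ L * b 0 := by
    linarith [key L le_rfl, hb L le_rfl]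
  refine ⟨h1, ?_⟩
  have hg := smoothing_geom κ L
  have hκL : κ ^ L < 1 := pow_lt_one₀ hκ.le hκ1 (by omega)
  have hS : 0 < ∑ j ∈ Finset.Icc 1 L, κ ^ (L - j) :=
    Finset.sum_pos (fun i _ => pow_pos hκ _) ⟨1, Finset.mem_Icc.mpr ⟨le_rfl, hL⟩⟩
  have hsplit : ∑ i ∈ Finset.Icc 1 L, κ ^ (L - i) * (2 * μ * a i - μ ^ 2 * τ2) =
      2 * μ * (∑ i ∈ Finset.Icc 1 L, κ ^ (L - i) * a i) -
        (∑ j ∈ Finset.Icc 1 L, κ ^ (L - j)) * (μ ^ 2 * τ2) := by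
    rw [Finset.mul_sum, Finset.sum_mul, ← Finset.sum_sub_distrib]
    exact Finset.sum_congr rfl fun i _ => by ring
  rw [hsplit] at h1
  have hdiv : ∑ i ∈ Finset.Icc 1 L, (κ ^ (L - i) / ∑ j ∈ Finset.Icc 1 L, κ ^ (L - j)) * a i =
      (∑ i ∈ Finset.Icc 1 L, κ ^ (L - i) * a i) / ∑ j ∈ Finset.Icc 1 L, κ ^ (L - j) := by
    rw [Finset.sum_div]
    exact Finset.sum_congr rfl fun i _ => by ring
  rw [hdiv, ← hg]
  generalize (∑ j ∈ Finset.Icc 1 L, κ ^ (L - j)) = S at *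
  have hk : 1 - κ ≠ 0 := by linarith
  rw [mul_div_mul_right _ _ hk, ← mul_div_assoc, div_le_iff₀ hS, add_mul, mul_right_comm (κ ^ L / S),
    div_mul_cancel₀ _ hS.ne']
  linarith
end
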